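/- Suppose n ≥ 2. Consider the two simple graphs on vertex set V = F^n defined as follows: in Γ₀ two distinct vertices x, y are adjacent if and only if φ(x − y, x − y) = 0, and in Γ₁ two distinct vertices x, y are adjacent if and only if φ(x − y, x − y) ≠ 0. Then both Γ₀ and Γ₁ are connected graphs of diameter exactly 2. -/

import Mathlib

/-!
Write `Q v = φ v v`. Both graphs are Cayley graphs of the additive group `F^n`, so diameter two
means: the connection set misses some nonzero vector, and every nonzero vector it misses is a sum
of two of its nonzero elements (`connected_and_ediam_eq_two`).

* If `v ≠ 0` is isotropic, take `w` with `φ v w ≠ 0`. As `Q (w + t v) = Q w + Tr (t φ(v,w))` and the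
  trace `F → F₀` is not zero, `w` may be chosen anisotropic (`exists_shift_anisotropic`). Choosing
  `a ≠ 0` with `Tr (φ(v, a w)) = 0` gives `Q (v - a w) = Q (a w) ≠ 0`, hence `v = a w + (v - a w)`.
* If `Q v ≠ 0`, then since `n ≥ 2` there is an anisotropic `w` orthogonal to `v`. Surjectivity of
  the norm onto `F₀` gives `b` with `v + b w` isotropic, and for `a` of trace `1` both
  `a (v + b w)` and `v - a (v + b w)` are isotropic.

The trace facts follow from counting roots of polynomials of degree `q₀ < q₀²`, the norm fact from
cyclicity of the unit group of `F`.
-/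

open Polynomial in
/-- A map `x ↦ x ^ q₀ + c x` has at most `q₀ < |F|` zeros. -/
lemma exists_pow_add_mul_ne_zero {F : Type*} [Field F] [Fintype F] {q₀ : ℕ} (h1 : 1 < q₀)
    (hF : Fintype.card F = q₀ ^ 2) (c : F) : ∃ x : F, x ^ q₀ + c * x ≠ 0 := by
  by_contra! h
  have hdeg : (X ^ q₀ + C c * X : F[X]).natDegree = q₀ := by
    rw [natDegree_add_eq_left_of_natDegree_lt, natDegree_X_pow]
    rw [natDegree_X_pow]
    exact lt_of_le_of_lt (by compute_degree) h1
  have h0 : (X ^ q₀ + C c * X : F[X]) = 0 := by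
    refine Polynomial.eq_zero_of_natDegree_lt_card_of_eval_eq_zero _ (f := (id : F → F))
      Function.injective_id (fun x => by simpa using h x) ?_
    rw [hdeg, hF]
    nlinarith
  rw [h0, natDegree_zero] at hdeg
  omega

/-- The norm `F → F₀` is surjective. -/
lemma exists_mul_pow_eq {F : Type*} [Field F] [Fintype F] {q₀ : ℕ} (h1 : 1 < q₀)
    (hF : Fintype.card F = q₀ ^ 2) (c : F) (hc : c ^ q₀ = c) : ∃ b : F, b * b ^ q₀ = c := by
  classical
  by_cases hc0 : c = 0
  · exact ⟨0, by simp [hc0]⟩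
  obtain ⟨g, hg⟩ := IsCyclic.exists_generator (α := Fˣ)
  obtain ⟨k, hk⟩ := (mem_powers_iff_mem_zpowers.mpr (hg (Units.mk0 c hc0)))
  have hk : g ^ k = Units.mk0 c hc0 := hk
  obtain ⟨m, rfl⟩ : ∃ m, q₀ = m + 1 := ⟨q₀ - 1, by omega⟩
  have hcm : (Units.mk0 c hc0) ^ m = 1 := by
    ext
    have : c ^ m * c = 1 * c := by rw [← pow_succ, hc, one_mul]
    simpa using mul_right_cancel₀ hc0 this
  rw [← hk, ← pow_mul] at hcm
  have hd := orderOf_dvd_of_pow_eq_one hcm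
  rw [orderOf_eq_card_of_forall_mem_zpowers hg, Nat.card_eq_fintype_card, Fintype.card_units, hF,
    show (m + 1) ^ 2 - 1 = (m + 2) * m by
      rw [Nat.sub_eq_iff_eq_add (Nat.one_le_pow _ _ (by omega))]; ring] at hd
  obtain ⟨j, hj⟩ := Nat.dvd_of_mul_dvd_mul_right (by omega) hd
  refine ⟨((g ^ j : Fˣ) : F), ?_⟩
  have : ((g ^ k : Fˣ) : F) = c := by rw [hk]; rfl
  rw [← this, hj]
  push_cast
  ring

/-- A translation-invariant graph has diameter two as soon as its connection set omits some
nonzero vector and every omitted nonzero vector is a sum of two elements of it. -/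
lemma connected_and_ediam_eq_two {V : Type*} [AddCommGroup V] (P : V → Prop) (G : SimpleGraph V)
    (hG : ∀ x y, G.Adj x y ↔ x ≠ y ∧ P (x - y))
    (hex : ∃ d, d ≠ 0 ∧ ¬ P d)
    (hsum : ∀ d, d ≠ 0 → ¬ P d → ∃ u, u ≠ 0 ∧ d - u ≠ 0 ∧ P u ∧ P (d - u)) :
    G.Connected ∧ G.ediam = 2 := by
  have hwalk : ∀ x y, ∃ w : G.Walk x y, w.length ≤ 2 := by
    intro x y
    by_cases hxy : x = y
    · subst hxy; exact ⟨.nil, by simp⟩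
    by_cases hP : P (x - y)
    · exact ⟨((hG x y).2 ⟨hxy, hP⟩).toWalk, by simp⟩
    obtain ⟨u, hu, hdu, hPu, hPdu⟩ := hsum (x - y) (sub_ne_zero.2 hxy) hP
    have e : x - (y + u) = x - y - u := by abel
    have h1 : G.Adj x (y + u) := (hG _ _).2 ⟨sub_ne_zero.1 (e ▸ hdu), e ▸ hPdu⟩
    have h2 : G.Adj (y + u) y := (hG _ _).2 ⟨by simpa using hu, by simpa using hPu⟩
    exact ⟨.cons h1 (.cons h2 .nil), by simp⟩
  refine ⟨{ preconnected := fun x y => ⟨(hwalk x y).choose⟩ }, le_antisymm ?_ ?_⟩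
  · rw [SimpleGraph.ediam_le_iff]
    intro x y
    obtain ⟨w, hw⟩ := hwalk x y
    exact (SimpleGraph.edist_le w).trans (by exact_mod_cast hw)
  · obtain ⟨d, hd, hPd⟩ := hex
    refine le_trans ?_ (SimpleGraph.edist_le_ediam (G := G) (u := d) (v := 0))
    by_contra! hlt
    have hle : G.edist d 0 ≤ 1 := Order.le_of_lt_add_one (by simpa [one_add_one_eq_two] using hlt)
    rcases SimpleGraph.edist_le_one_iff_adj_or_eq.1 hle with h | h
    · exact hPd (by simpa using ((hG _ _).1 h).2)
    · exact hd h

/-- Adding multiples of an isotropic `v` to a vector `w` not orthogonal to it changes `φ w w` by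
arbitrary traces, so some such translate of `w` is anisotropic. The map `s` plays the role of
`x ↦ x ^ q₀`. -/
lemma exists_shift_anisotropic {F V : Type*} [Field F] [AddCommGroup V] [Module F V]
    (s : F → F) (hs : ∃ t, s t + t ≠ 0) (φ : V → V → F)
    (haddl : ∀ u v w, φ (u + v) w = φ u w + φ v w)
    (haddr : ∀ u v w, φ u (v + w) = φ u v + φ u w)
    (hsmull : ∀ (a : F) u v, φ (a • u) v = a * φ u v)
    (hsmulr : ∀ (a : F) u v, φ u (a • v) = s a * φ u v)
    (hmul : ∀ a b, s (a * b) = s a * s b)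
    (hconj : ∀ u v, φ v u = s (φ u v))
    (v w : V) (hv : φ v v = 0) (hvw : φ v w ≠ 0) : ∃ t : F, φ (w + t • v) (w + t • v) ≠ 0 := by
  by_contra! h
  obtain ⟨t, ht⟩ := hs
  have key : ∀ r, φ w w + (s (r * φ v w) + r * φ v w) = 0 := by
    intro r
    have := h r
    simp only [haddl, haddr, hsmull, hsmulr, hv] at this
    rw [hmul, ← hconj]
    linear_combination this
  have h0 : φ w w = 0 := by simpa using h 0
  apply ht
  have := key (t / φ v w)
  rwa [div_mul_cancel₀ _ hvw, h0, zero_add] at this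


/-- For `n ≥ 2`, the graph on `F^n` with `x ~ y` iff `φ (x-y) (x-y) = 0` (`x ≠ y`),
and the graph with `x ~ y` iff `φ (x-y) (x-y) ≠ 0`, are both connected of
diameter exactly `2`. -/
theorem stmt_5 (p l : ℕ) (hp : p.Prime) (hl : 0 < l)
    (q₀ : ℕ) (hq₀ : q₀ = p ^ l)
    (F : Type*) [Field F] [Fintype F] (hF : Fintype.card F = q₀ ^ 2)
    (n : ℕ) (hn : 2 ≤ n)
    (φ : (Fin n → F) → (Fin n → F) → F)
    (haddl : ∀ u v w : Fin n → F, φ (u + v) w = φ u w + φ v w)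
    (haddr : ∀ u v w : Fin n → F, φ u (v + w) = φ u v + φ u w)
    (hsmull : ∀ (a : F) (u v : Fin n → F), φ (a • u) v = a * φ u v)
    (hsmulr : ∀ (a : F) (u v : Fin n → F), φ u (a • v) = a ^ q₀ * φ u v)
    (hconj : ∀ u v : Fin n → F, φ v u = (φ u v) ^ q₀)
    (hnondeg : ∀ u : Fin n → F, (∀ v, φ u v = 0) → u = 0)
    (Γ₀ Γ₁ : SimpleGraph (Fin n → F))
    (hΓ₀ : ∀ x y, Γ₀.Adj x y ↔ x ≠ y ∧ φ (x - y) (x - y) = 0)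
    (hΓ₁ : ∀ x y, Γ₁.Adj x y ↔ x ≠ y ∧ φ (x - y) (x - y) ≠ 0) :
    Γ₀.Connected ∧ Γ₀.ediam = 2 ∧ Γ₁.Connected ∧ Γ₁.ediam = 2 := by
  have h1 : 1 < q₀ := hq₀ ▸ Nat.one_lt_pow hl.ne' hp.one_lt
  have : Fact p.Prime := ⟨hp⟩
  have : CharP F p := charP_of_card_eq_prime_pow (f := l * 2) (by
    rw [hF, hq₀, pow_mul])
  have hadd : ∀ a b : F, (a + b) ^ q₀ = a ^ q₀ + b ^ q₀ := fun a b => by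
    rw [hq₀]; exact add_pow_char_pow a b p l
  have hneg1 : (-1 : F) ^ q₀ = -1 := by
    have := hadd 1 (-1)
    rw [add_neg_cancel, zero_pow (by omega), one_pow] at this
    linear_combination -this
  have hinv : ∀ a : F, (a ^ q₀) ^ q₀ = a := fun a => by
    rw [← pow_mul, ← sq, ← hF, FiniteField.pow_card]
  have hsubl : ∀ u v w, φ (u - v) w = φ u w - φ v w := fun u v w => by
    rw [sub_eq_add_neg, ← neg_one_smul F v, haddl, hsmull]; ring
  have hsubr : ∀ u v w, φ u (v - w) = φ u v - φ u w := fun u v w => by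
    rw [sub_eq_add_neg, ← neg_one_smul F w, haddr, hsmulr, hneg1]; ring
  have hz : φ 0 0 = 0 := by simpa using hsmull 0 0 0
  have htr : ∃ t : F, t ^ q₀ + t ≠ 0 := by simpa using exists_pow_add_mul_ne_zero h1 hF 1
  have htr1 : ∃ a : F, a ^ q₀ + a = 1 := by
    obtain ⟨t, ht⟩ := htr
    have hfix : (t ^ q₀ + t) ^ q₀ = t ^ q₀ + t := by rw [hadd, hinv, add_comm]
    refine ⟨t / (t ^ q₀ + t), ?_⟩
    rw [div_pow, hfix, ← add_div, div_self ht]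
  have htr0 : ∃ a : F, a ≠ 0 ∧ a ^ q₀ + a = 0 := by
    obtain ⟨x, hx⟩ := exists_pow_add_mul_ne_zero h1 hF (-1)
    refine ⟨x ^ q₀ + -1 * x, hx, ?_⟩
    rw [hadd, mul_pow, hinv, hneg1]; ring
  have hshift := exists_shift_anisotropic (fun x : F => x ^ q₀) htr φ haddl haddr hsmull hsmulr
    (fun a b => mul_pow a b q₀) hconj
  -- Every nonzero isotropic vector is a sum of two anisotropic ones.
  have hC : ∀ v, v ≠ 0 → φ v v = 0 → ∃ u, φ u u ≠ 0 ∧ φ (v - u) (v - u) ≠ 0 := by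
    intro v hv0 hv
    obtain ⟨w, hw⟩ : ∃ w, φ v w ≠ 0 := by
      by_contra! h
      exact hv0 (hnondeg v h)
    obtain ⟨t, ht⟩ := hshift v w hv hw
    have hvw : φ v (w + t • v) ≠ 0 := by rwa [haddr, hsmulr, hv, mul_zero, add_zero]
    generalize w + t • v = z at ht hvw
    obtain ⟨a, ha, hatr⟩ := htr0
    have hzv : φ z v ≠ 0 := by rw [hconj v z]; exact pow_ne_zero _ hvw
    -- `b` is chosen so that `φ (b • z) v = a` has trace zero.
    obtain ⟨b, hb⟩ : ∃ b : F, b * φ z v = a := ⟨a / φ z v, div_mul_cancel₀ _ hzv⟩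
    have hb0 : b ≠ 0 := by rintro rfl; exact ha (by rw [← hb, zero_mul])
    have hu : φ (b • z) (b • z) ≠ 0 := by
      rw [hsmull, hsmulr]
      exact mul_ne_zero hb0 (mul_ne_zero (pow_ne_zero _ hb0) ht)
    refine ⟨b • z, hu, ?_⟩
    have h2 : φ (b • z) v = a := by rw [hsmull, hb]
    have h3 : φ v (b • z) = a ^ q₀ := by rw [hconj (b • z) v, h2]
    rw [hsubl, hsubr, hsubr, hv, h2, h3]
    intro h
    exact hu (by linear_combination h + hatr)
  -- Every anisotropic vector is a sum of two isotropic ones.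
  have hB : ∀ v, φ v v ≠ 0 → ∃ u, φ u u = 0 ∧ φ (v - u) (v - u) = 0 := by
    intro v hv
    have hQ : ∀ x, (φ x x) ^ q₀ = φ x x := fun x => (hconj x x).symm
    obtain ⟨w, hwv, hw⟩ : ∃ w, φ w v = 0 ∧ φ w w ≠ 0 := by
      let f : (Fin n → F) →ₗ[F] F :=
        { toFun := fun x => φ x v, map_add' := fun x y => haddl x y v,
          map_smul' := fun a x => hsmull a x v }
      obtain ⟨w, hwk, hw0⟩ := Submodule.exists_mem_ne_zero_of_ne_bot
        (LinearMap.ker_ne_bot_of_finrank_lt (f := f) (by simpa using (by omega : 1 < n)))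
      have hwv : φ w v = 0 := hwk
      by_cases hw : φ w w = 0
      · obtain ⟨z, hz⟩ : ∃ z, φ w z ≠ 0 := by
          by_contra! h
          exact hw0 (hnondeg w h)
        -- Replace `z` by its component orthogonal to `v`.
        have hz1 : φ (z - (φ z v / φ v v) • v) v = 0 := by
          rw [hsubl, hsmull, div_mul_cancel₀ _ hv, sub_self]
        have hz2 : φ w (z - (φ z v / φ v v) • v) ≠ 0 := by
          rwa [hsubr, hsmulr, hwv, mul_zero, sub_zero]
        obtain ⟨t, ht⟩ := hshift w _ hw hz2
        exact ⟨_, by rw [haddl, hz1, hsmull, hwv, mul_zero, add_zero], ht⟩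
      · exact ⟨w, hwv, hw⟩
    have hvw : φ v w = 0 := by rw [hconj w v, hwv, zero_pow (by omega)]
    obtain ⟨b, hb⟩ := exists_mul_pow_eq h1 hF (-1 * φ v v / φ w w) (by
      rw [div_pow, mul_pow, hneg1, hQ, hQ])
    obtain ⟨a, ha⟩ := htr1
    have hbw : b * b ^ q₀ * φ w w = - φ v v := by
      rw [hb, div_mul_cancel₀ _ hw, neg_one_mul]
    have hu : φ (v + b • w) (v + b • w) = 0 := by
      rw [haddl, haddr, haddr, hsmull, hsmull, hsmulr, hsmulr, hvw, hwv]
      linear_combination hbw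
    have hvu : φ v (v + b • w) = φ v v := by
      rw [haddr, hsmulr, hvw, mul_zero, add_zero]
    have huv : φ (v + b • w) v = φ v v := by
      rw [haddl, hsmull, hwv, mul_zero, add_zero]
    refine ⟨a • (v + b • w), by rw [hsmull, hsmulr, hu]; ring, ?_⟩
    rw [hsubl, hsubr, hsubr, hsmull, hsmulr, hsmull, hsmulr, hu, hvu, huv]
    linear_combination -φ v v * ha
  have hne : ∀ {x}, φ x x ≠ 0 → x ≠ 0 := by
    rintro x hx rfl
    exact hx hz
  obtain ⟨v, hv⟩ : ∃ v, φ v v ≠ 0 := by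
    by_contra! h
    have : Nonempty (Fin n) := ⟨⟨0, by omega⟩⟩
    obtain ⟨x, hx⟩ := exists_ne (0 : Fin n → F)
    obtain ⟨u, hu, -⟩ := hC x hx (h x)
    exact hu (h u)
  -- Both summands are nonzero: otherwise the other one would be the anisotropic vector `d`.
  have hB' : ∀ d, φ d d ≠ 0 →
      ∃ u, u ≠ 0 ∧ d - u ≠ 0 ∧ φ u u = 0 ∧ φ (d - u) (d - u) = 0 := by
    intro d hd
    obtain ⟨u, hu, hdu⟩ := hB d hd
    refine ⟨u, ?_, ?_, hu, hdu⟩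
    · rintro rfl
      exact hd (by simpa using hdu)
    · intro h
      rw [sub_eq_zero] at h
      exact hd (h ▸ hu)
  obtain ⟨c0, e0⟩ := connected_and_ediam_eq_two (fun x => φ x x = 0) Γ₀ hΓ₀ ⟨v, hne hv, hv⟩
    (fun d _ hd => hB' d hd)
  obtain ⟨c1, e1⟩ := connected_and_ediam_eq_two (fun x => φ x x ≠ 0) Γ₁ hΓ₁
    (by
      obtain ⟨u, hu0, -, hu, -⟩ := hB' v hv
      exact ⟨u, hu0, not_not.2 hu⟩)
    (fun d hd0 hd => by
      obtain ⟨u, hu, hdu⟩ := hC d hd0 (not_not.1 hd)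
      exact ⟨u, hne hu, hne hdu, hu, hdu⟩)
  exact ⟨c0, e0, c1, e1⟩
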